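/- arXiv:2410.00882 — 3 statements merged into one kernel-verified Lean document; each statement's English description precedes it below -/
import Mathlib

section
/- Let Ω be a finite set, let 0 < ε ≤ 1/2, and let p, r be probability distributions on Ω with p(x) > 0 and r(x) > 0 for all x ∈ Ω, satisfying |r(x)/p(x) − 1| ≤ ε for every x. Define b(x) := (1/(2ε))·(r(x)/p(x) − (1−ε)) and a(x) := (1−ε)/(1+ε) + (2ε/(1+ε))·b(x). Then: (i) 0 ≤ b(x) ≤ 1 and 0 ≤ a(x) ≤ 1 for every x, so all the Bernoulli acceptance probabilities used by the rejection sampler are valid; (ii) the per-iteration acceptance probability satisfies Σ_{x∈Ω} p(x)·a(x) = 1/(1+ε); and (iii) conditioned on acceptance, the distribution of the returned state is exactly r, i.e. p(x)·a(x) / (Σ_{y∈Ω} p(y)·a(y)) = r(x) for every x ∈ Ω. -/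
/-- Correctness of the acceptance probabilities in GenPerfectSamplerRS.
With `0 < ε ≤ 1/2`, probability distributions `p, r > 0` pointwise and
`|r(x)/p(x) − 1| ≤ ε` for all `x`, setting `b(x) = (1/(2ε))·(r(x)/p(x) − (1−ε))` and
`a(x) = (1−ε)/(1+ε) + (2ε/(1+ε))·b(x)`:
(i) `0 ≤ b(x) ≤ 1` and `0 ≤ a(x) ≤ 1`,
(ii) `Σ_x p(x)·a(x) = 1/(1+ε)`,
(iii) `p(x)·a(x)/(Σ_y p(y)·a(y)) = r(x)` for all `x`. -/
theorem stmt3 {Ω : Type*} [Fintype Ω] (p r : Ω → ℝ) (ε : ℝ)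
    (hε : 0 < ε) (hε' : ε ≤ 1 / 2)
    (hp : ∀ x, 0 < p x) (hpsum : ∑ x, p x = 1)
    (hr : ∀ x, 0 < r x) (hrsum : ∑ x, r x = 1)
    (happrox : ∀ x, |r x / p x - 1| ≤ ε)
    (b a : Ω → ℝ)
    (hb : ∀ x, b x = (1 / (2 * ε)) * (r x / p x - (1 - ε)))
    (ha : ∀ x, a x = (1 - ε) / (1 + ε) + (2 * ε / (1 + ε)) * b x) :
    (∀ x, 0 ≤ b x ∧ b x ≤ 1) ∧
    (∀ x, 0 ≤ a x ∧ a x ≤ 1) ∧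
    (∑ x, p x * a x = 1 / (1 + ε)) ∧
    (∀ x, p x * a x / (∑ y, p y * a y) = r x) := by
  have h1 : (0 : ℝ) < 1 + ε := by linarith
  have h1' : (1 + ε) ≠ 0 := h1.ne'
  have hε0 : ε ≠ 0 := hε.ne'
  have haq : ∀ x, a x = (r x / p x) / (1 + ε) := by
    intro x
    rw [ha, hb]
    generalize r x / p x = q
    field_simp
    ring
  have hpa : ∀ x, p x * a x = r x / (1 + ε) := by
    intro x
    have := (hp x).ne'
    rw [haq]
    field_simp
  have hsum : ∑ x, p x * a x = 1 / (1 + ε) := by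
    simp_rw [hpa]
    rw [← Finset.sum_div, hrsum]
  refine ⟨fun x => ?_, fun x => ?_, hsum, fun x => ?_⟩
  · obtain ⟨hl, hu⟩ := abs_le.mp (happrox x)
    rw [hb]
    constructor
    · exact mul_nonneg (by positivity) (by linarith)
    · rw [one_div, inv_mul_le_iff₀ (by positivity)]
      linarith
  · obtain ⟨hl, hu⟩ := abs_le.mp (happrox x)
    rw [haq]
    constructor
    · exact div_nonneg (by linarith) h1.le
    · rw [div_le_one h1]
      linarith
  · rw [hsum, hpa]
    field_simp
end

section
/- Let n ≥ 1 and let G be a bipartite graph on two vertex sets of size n, identified with a set E ⊆ Fin n × Fin n of edges. Identify perfect matchings of the complete bipartite graph K_{n,n} with permutations σ of Fin n, and assign each permutation σ the weight w(σ) := ∏_{i} λ(i, σ(i)), where λ(i,j) = 1 if (i,j) ∈ E and λ(i,j) = 1/n! otherwise. Let S_G := {σ : (i, σ(i)) ∈ E for all i} be the set of perfect matchings of G. Then: (i) w(σ) = 1 for every σ ∈ S_G; (ii) Σ_{σ ∉ S_G} w(σ) ≤ 1; and consequently (iii) if S_G is nonempty, then under the distribution on permutations proportional to w, the probability of S_G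 is at least |S_G|/(|S_G| + 1) ≥ 1/2, and the conditional distribution given S_G is uniform on S_G. -/
/-- Identify perfect matchings of `K_{n,n}` with permutations of `Fin n`,
give each permutation `σ` weight `w(σ) = ∏ i λ(i, σ i)` where `λ(i,j) = 1` for edges of
`G` and `1/n!` for non-edges. With `S_G` the set of perfect matchings of `G`:
(i) `w(σ) = 1` on `S_G`; (ii) the total weight of permutations outside `S_G` is at
most 1; (iii) if `S_G ≠ ∅`, the weight of `S_G` in the distribution proportional to `w`
is at least `|S_G|/(|S_G|+1) ≥ 1/2`, and conditioned on `S_G` the distribution is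
uniform. -/
theorem stmt15 (n : ℕ) (hn : 1 ≤ n) (E : Finset (Fin n × Fin n)) :
    ∀ (w : Equiv.Perm (Fin n) → ℝ),
      (∀ σ, w σ = ∏ i, (if (i, σ i) ∈ E then (1 : ℝ) else 1 / (n.factorial : ℝ))) →
      ∀ (S : Finset (Equiv.Perm (Fin n))),
        (∀ σ, σ ∈ S ↔ ∀ i, (i, σ i) ∈ E) →
        ((∀ σ ∈ S, w σ = 1) ∧
         (∑ σ ∈ Finset.univ \ S, w σ ≤ 1) ∧
         (S.Nonempty →
           ((S.card : ℝ) / ((S.card : ℝ) + 1) ≤ (∑ σ ∈ S, w σ) / (∑ σ, w σ)) ∧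
           ((1 : ℝ) / 2 ≤ (S.card : ℝ) / ((S.card : ℝ) + 1)) ∧
           (∀ σ ∈ S, w σ / (∑ σ' ∈ S, w σ') = 1 / (S.card : ℝ)))) := by
  intro w hw S hS
  have hf : (1 : ℝ) ≤ (n.factorial : ℝ) := by
    exact_mod_cast Nat.succ_le_of_lt (Nat.factorial_pos n)
  have hfpos : (0 : ℝ) < (n.factorial : ℝ) := by linarith
  have hle : 1 / (n.factorial : ℝ) ≤ 1 := by
    rw [div_le_one hfpos]; exact hf
  have hpos : (0 : ℝ) < 1 / (n.factorial : ℝ) := by positivity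
  have h1 : ∀ σ ∈ S, w σ = 1 := by
    intro σ hσ
    rw [hw]
    apply Finset.prod_eq_one
    intro i _
    rw [if_pos ((hS σ).1 hσ i)]
  have hw0 : ∀ σ, 0 ≤ w σ := by
    intro σ
    rw [hw]
    apply Finset.prod_nonneg
    intro i _
    split_ifs <;> linarith
  have hout : ∀ σ ∈ Finset.univ \ S, w σ ≤ 1 / (n.factorial : ℝ) := by
    intro σ hσ
    have hσ' : σ ∉ S := (Finset.mem_sdiff.1 hσ).2
    rw [hS] at hσ'
    obtain ⟨i, hi⟩ := not_forall.1 hσ'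
    rw [hw, ← Finset.mul_prod_erase Finset.univ _ (Finset.mem_univ i), if_neg hi]
    apply mul_le_of_le_one_right hpos.le
    apply Finset.prod_le_one
    · intro j _
      split_ifs <;> linarith
    · intro j _
      split_ifs <;> linarith
  have h2 : ∑ σ ∈ Finset.univ \ S, w σ ≤ 1 := by
    have hcard : (Finset.univ \ S).card ≤ n.factorial := by
      refine (Finset.card_le_univ _).trans ?_
      rw [Fintype.card_perm, Fintype.card_fin]
    have hcard' : ((Finset.univ \ S).card : ℝ) ≤ (n.factorial : ℝ) := by
      exact_mod_cast hcard
    calc ∑ σ ∈ Finset.univ \ S, w σ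
        ≤ (Finset.univ \ S).card • (1 / (n.factorial : ℝ)) :=
          Finset.sum_le_card_nsmul _ _ _ hout
      _ = ((Finset.univ \ S).card : ℝ) / (n.factorial : ℝ) := by
          rw [nsmul_eq_mul, mul_one_div]
      _ ≤ 1 := by rw [div_le_one hfpos]; exact hcard'
  refine ⟨h1, h2, fun hne => ?_⟩
  have hsum : ∑ σ ∈ S, w σ = (S.card : ℝ) := by
    rw [Finset.sum_congr rfl h1]; simp
  have hc : (1 : ℝ) ≤ (S.card : ℝ) := by
    exact_mod_cast Finset.card_pos.2 hne
  have htot : ∑ σ ∈ Finset.univ \ S, w σ + ∑ σ ∈ S, w σ = ∑ σ, w σ :=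
    Finset.sum_sdiff (Finset.subset_univ S)
  have h0 : 0 ≤ ∑ σ ∈ Finset.univ \ S, w σ := Finset.sum_nonneg fun σ _ => hw0 σ
  refine ⟨?_, ?_, ?_⟩
  · rw [hsum] at htot ⊢
    apply div_le_div_of_nonneg_left <;> linarith
  · rw [div_le_div_iff₀ (by norm_num) (by linarith)]
    linarith
  · intro σ hσ
    rw [h1 σ hσ, hsum]
end

section
/- Let Ω be a finite set partitioned into pairwise disjoint nonempty subsets 𝒫, 𝒩_1, …, 𝒩_k, let λ : Ω → ℝ be strictly positive, write λ(S) := Σ_{M∈S} λ(M), and set w_i* := λ(𝒫)/λ(𝒩_i). Suppose the transition weights w_1, …, w_k satisfy w_i*/2 ≤ w_i ≤ 2·w_i* for every i. Define Λ(M) := λ(M) for M ∈ 𝒫 and Λ(M) := w_i·λ(M) for M ∈ 𝒩_i, and let μ(M) = Λ(M)/Σ_{M'∈Ω} Λ(M'). Then μ(𝒫) := Σ_{M∈𝒫} μ(M) ≥ 1/(1 + 2k), and also μ(𝒩_i) ≥ 1/(2(1 + 2k)) for every i. -/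
/-- With `Ω` partitioned into `𝒫, 𝒩_1, …, 𝒩_k` (here `Pm`, `Nm i`),
positive `λ`, ideal weights `w_i* = λ(𝒫)/λ(𝒩_i)` and transition weights satisfying
`w_i*/2 ≤ w_i ≤ 2·w_i*`, the stationary distribution `μ(M) ∝ Λ(M)` (with
`Λ = λ` on `𝒫`, `Λ = w_i·λ` on `𝒩_i`) satisfies `μ(𝒫) ≥ 1/(1+2k)` and
`μ(𝒩_i) ≥ 1/(2(1+2k))` for every `i`. -/
theorem stmt17 {Ω : Type*} [Fintype Ω] {k : ℕ}
    (Pm : Finset Ω) (Nm : Fin k → Finset Ω)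
    (hPne : Pm.Nonempty) (hNne : ∀ i, (Nm i).Nonempty)
    (hdisjPN : ∀ i, Disjoint Pm (Nm i))
    (hdisjNN : ∀ i j, i ≠ j → Disjoint (Nm i) (Nm j))
    (hcover : ∀ M : Ω, M ∈ Pm ∨ ∃ i, M ∈ Nm i)
    (lam : Ω → ℝ) (hlam : ∀ M, 0 < lam M)
    (w : Fin k → ℝ)
    (hwlow : ∀ i, ((∑ M ∈ Pm, lam M) / (∑ M ∈ Nm i, lam M)) / 2 ≤ w i)
    (hwhigh : ∀ i, w i ≤ 2 * ((∑ M ∈ Pm, lam M) / (∑ M ∈ Nm i, lam M)))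
    (Lam : Ω → ℝ)
    (hLamP : ∀ M ∈ Pm, Lam M = lam M)
    (hLamN : ∀ i, ∀ M ∈ Nm i, Lam M = w i * lam M)
    (μ : Ω → ℝ) (hμ : ∀ M, μ M = Lam M / ∑ M', Lam M') :
    (1 / (1 + 2 * (k : ℝ)) ≤ ∑ M ∈ Pm, μ M) ∧
    (∀ i, 1 / (2 * (1 + 2 * (k : ℝ))) ≤ ∑ M ∈ Nm i, μ M) := by
  classical
  have hPpos : 0 < ∑ M ∈ Pm, lam M := Finset.sum_pos (fun M _ => hlam M) hPne
  have hNpos : ∀ i, 0 < ∑ M ∈ Nm i, lam M :=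
    fun i => Finset.sum_pos (fun M _ => hlam M) (hNne i)
  have hPL : ∑ M ∈ Pm, Lam M = ∑ M ∈ Pm, lam M := Finset.sum_congr rfl hLamP
  have hNL : ∀ i, ∑ M ∈ Nm i, Lam M = w i * ∑ M ∈ Nm i, lam M := by
    intro i
    rw [Finset.mul_sum]
    exact Finset.sum_congr rfl (hLamN i)
  have hup : ∀ i, ∑ M ∈ Nm i, Lam M ≤ 2 * ∑ M ∈ Pm, lam M := by
    intro i
    have h := hwhigh i
    rw [← mul_div_assoc, le_div_iff₀ (hNpos i)] at h
    rw [hNL]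
    exact h
  have hlow : ∀ i, (∑ M ∈ Pm, lam M) / 2 ≤ ∑ M ∈ Nm i, Lam M := by
    intro i
    have h := hwlow i
    rw [div_right_comm, div_le_iff₀ (hNpos i)] at h
    rw [hNL]
    exact h
  have huniv : (Finset.univ : Finset Ω) = Pm ∪ Finset.univ.biUnion Nm := by
    ext M
    simpa using hcover M
  have htot : ∑ M', Lam M' = ∑ M ∈ Pm, lam M + ∑ i, ∑ M ∈ Nm i, Lam M := by
    rw [huniv, Finset.sum_union, Finset.sum_biUnion, hPL]
    · intro i _ j _ hij
      exact hdisjNN i j hij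
    · rw [Finset.disjoint_biUnion_right]
      exact fun i _ => hdisjPN i
  have hle : ∑ M', Lam M' ≤ (1 + 2 * (k : ℝ)) * ∑ M ∈ Pm, lam M := by
    have h := Finset.sum_le_sum (fun i (_ : i ∈ (Finset.univ : Finset (Fin k))) => hup i)
    simp only [Finset.sum_const, Finset.card_univ, Fintype.card_fin, nsmul_eq_mul] at h
    rw [htot]
    linarith
  have hZ : 0 < ∑ M', Lam M' := by
    have h := Finset.sum_nonneg (fun i (_ : i ∈ (Finset.univ : Finset (Fin k))) =>
      (half_pos hPpos).le.trans (hlow i))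
    rw [htot]
    linarith
  have hk : (0 : ℝ) < 1 + 2 * (k : ℝ) := by positivity
  simp only [hμ, ← Finset.sum_div]
  refine ⟨?_, fun i => ?_⟩
  · rw [hPL, div_le_div_iff₀ hk hZ]
    linarith
  · rw [div_le_div_iff₀ (by positivity) hZ]
    have h := mul_le_mul_of_nonneg_right (hlow i) hk.le
    linarith
end
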